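/- Let p be an odd prime and d a positive even integer with p ≡ 1 (mod d). Then Σ_{k=0}^{(p−1)/d} (−1)^k (2dk+1) (1/d)_k^3 / k!^3 ≡ (−1)^{(p−1)/d} · p (mod p^3). -/

import Mathlib

open Finset

/-- The Pochhammer symbol `(a)_k = a(a+1)⋯(a+k-1)` for rational `a`. -/
def poch (a : ℚ) (k : ℕ) : ℚ := ∏ j ∈ Finset.range k, (a + j)

lemma poch_succ (a : ℚ) (k : ℕ) : poch a (k + 1) = poch a k * (a + k) := by
  unfold poch; rw [Finset.prod_range_succ]

lemma poch_zero (a : ℚ) : poch a 0 = 1 := by simp [poch]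

lemma poch_ne (a : ℚ) (h : ∀ j : ℕ, a + j ≠ 0) (k : ℕ) : poch a k ≠ 0 := by
  unfold poch; exact Finset.prod_ne_zero_iff.mpr fun j _ => h j

/-- summand of the WZ proof -/
def wF (a b : ℚ) (n k : ℕ) : ℚ :=
  (a + 2 * k) * poch a k * poch b k * (n.choose k) * poch (1 + a - b) n /
    (poch (1 + a - b) k * poch (1 + a) (n + k))

/-- WZ mate -/
def wG (a b : ℚ) (n : ℕ) : ℕ → ℚ
  | 0 => 0
  | k + 1 => - (poch a (k + 1) * poch b (k + 1) * (n.choose k) * poch (1 + a - b) n /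
    (poch (1 + a - b) k * poch (1 + a) (n + k + 1)))

lemma wz_step (a b : ℚ) (h1 : ∀ j : ℕ, 1 + a - b + j ≠ 0) (h2 : ∀ j : ℕ, 1 + a + j ≠ 0)
    (n k : ℕ) : wF a b (n + 1) k - wF a b n k = wG a b n (k + 1) - wG a b n k := by
  cases k with
  | zero =>
    have e1 := poch_ne _ h1 n
    have e2 := poch_ne _ h2 n
    have e3 := h2 n
    simp only [wF, wG, poch_zero, poch_succ, Nat.choose_zero_right, add_zero]
    push_cast
    field_simp
    ring
  | succ k =>
    have e1 := poch_ne _ h1 k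
    have e2 := poch_ne _ h2 (n + k)
    have e3 := h1 k
    have e4 := h2 (n + k)
    have e5 := h2 (n + k + 1)
    have hc : ((n.choose (k + 1) : ℚ)) * (k + 1) = n.choose k * (n - k) := by
      rcases le_or_gt k n with h | h
      · have := Nat.choose_succ_right_eq n k
        have h' : ((n - k : ℕ) : ℚ) = n - k := by push_cast [h]; ring
        rw [← h']; exact_mod_cast this
      · rw [Nat.choose_eq_zero_of_lt h, Nat.choose_eq_zero_of_lt (by omega)]; simp
    have i1 : n + 1 + (k + 1) = n + k + 1 + 1 := by ring
    have i2 : n + (k + 1) = n + k + 1 := by ring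
    simp only [wF, wG, i1, i2, poch_succ, Nat.choose_succ_succ]
    push_cast at *
    generalize poch (1 + a - b) k = u1 at *
    generalize poch (1 + a) (n + k) = u2 at *
    generalize poch (1 + a - b) n = u3 at *
    generalize poch a k = u4 at *
    generalize poch b k = u5 at *
    generalize (n.choose k : ℚ) = c at *
    generalize (n.choose (k + 1) : ℚ) = c' at *
    generalize (n : ℚ) = n at *
    generalize (k : ℚ) = k at *
    field_simp
    linear_combination -(u3 * u4 * u5 * (a + k) * (b + k) * (1 + b + k)) * hc

lemma wz_sum (a b : ℚ) (h1 : ∀ j : ℕ, 1 + a - b + j ≠ 0) (h2 : ∀ j : ℕ, 1 + a + j ≠ 0)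
    (n : ℕ) : ∑ k ∈ range (n + 1), wF a b n k = a := by
  induction n with
  | zero => simp [wF, poch_zero]
  | succ n ih =>
    have h : ∑ k ∈ range (n + 2), (wF a b (n + 1) k - wF a b n k) = 0 := by
      rw [Finset.sum_congr rfl fun k _ => wz_step a b h1 h2 n k, Finset.sum_range_sub]
      simp [wG]
    rw [Finset.sum_sub_distrib, Finset.sum_range_succ (fun k => wF a b n k), ih] at h
    have : wF a b n (n + 1) = 0 := by simp [wF]
    rw [this] at h
    linarith

open Polynomial in
/-- the polynomial summand -/
noncomputable def tP (d n k : ℕ) : ℤ[X] :=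
  C ((-1) ^ k * (2 * d * k + 1) * (∏ j ∈ range k, (1 + j * d : ℤ)) * d ^ (n - k) *
    (n.descFactorial (n - k) : ℤ)) *
    (∏ j ∈ range k, (C ((1 + j * d : ℤ) ^ 2) - X)) *
    ∏ j ∈ range (n - k), (C ((d : ℤ) ^ 2 * ((n : ℤ) - j) ^ 2) - X)

lemma desc_prod {R : Type*} [CommRing R] (n k : ℕ) :
    ∏ j ∈ range k, ((n : R) - j) = n.descFactorial k := by
  induction k with
  | zero => simp
  | succ k ih =>
    rw [Finset.prod_range_succ, ih, Nat.descFactorial_succ]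
    rcases le_or_gt k n with h | h
    · push_cast [h]; ring
    · rw [Nat.descFactorial_of_lt h]; simp

open Polynomial in
lemma tP_mod (p d n k : ℕ) [Fact p.Prime] (hp : p = n * d + 1) (hk : k ≤ n) :
    (tP d n k).map (Int.castRingHom (ZMod p)) =
      C ((2 * d * k + 1 : ZMod p) * d ^ n * (n.descFactorial k) * (n.descFactorial (n - k))) *
      (∏ j ∈ range k, (C ((d : ZMod p) ^ 2 * ((n : ZMod p) - j) ^ 2) - X)) *
    ∏ j ∈ range (n - k), (C ((d : ZMod p) ^ 2 * ((n : ZMod p) - j) ^ 2) - X) := by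
  have h0 : (n : ZMod p) * d + 1 = 0 := by
    have h := ZMod.natCast_self p
    have h' := congrArg (fun m : ℕ => (m : ZMod p)) hp
    push_cast at h'
    rw [← h', h]
  have h1 : ∀ j : ℕ, (1 + j * d : ZMod p) = -d * (n - j) := by
    intro j; linear_combination -h0 + 2 * h0
  have h2 : (∏ j ∈ range k, (1 + j * d : ZMod p)) = (-d) ^ k * n.descFactorial k := by
    rw [← desc_prod, Finset.prod_congr rfl fun j _ => h1 j, Finset.prod_mul_distrib]; simp
  unfold tP
  simp only [Polynomial.map_mul, Polynomial.map_prod, Polynomial.map_sub, Polynomial.map_C,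
    Polynomial.map_X]
  congr 1
  congr 1
  · congr 1
    simp only [map_mul, map_pow, map_neg, map_one, map_add, map_prod, map_natCast, map_ofNat]
    rw [h2]
    have : (d : ZMod p) ^ n = d ^ k * d ^ (n - k) := by rw [← pow_add]; congr 1; omega
    rw [this, neg_pow (d : ZMod p)]
    have e : ((-1 : ZMod p) ^ k) * (-1) ^ k = 1 := by rw [← mul_pow]; simp
    linear_combination ((2 * d * k + 1) * d ^ k * d ^ (n - k) * (n.descFactorial k) * (n.descFactorial (n - k)) : ZMod p) * e
  · refine Finset.prod_congr rfl fun j _ => ?_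
    congr 2
    simp
    rw [h1]; ring
  · simp

open Polynomial in
lemma sum_mod (p d n : ℕ) [Fact p.Prime] (hodd : Odd p) (hp : p = n * d + 1) :
    (C (p : ℤ)) ∣ ∑ k ∈ range (n + 1), tP d n k := by
  have h0 : (n : ZMod p) * d + 1 = 0 := by
    have h := ZMod.natCast_self p
    have h' := congrArg (fun m : ℕ => (m : ZMod p)) hp
    push_cast at h'
    rw [← h', h]
  have hz : (∑ k ∈ range (n + 1), tP d n k).map (Int.castRingHom (ZMod p)) = 0 := by
    set S := (∑ k ∈ range (n + 1), tP d n k).map (Int.castRingHom (ZMod p)) with hS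
    have e1 : S = ∑ k ∈ range (n + 1), (tP d n k).map (Int.castRingHom (ZMod p)) := by
      rw [hS, Polynomial.map_sum]
    have e2 : S = ∑ k ∈ range (n + 1), (tP d n (n - k)).map (Int.castRingHom (ZMod p)) := by
      rw [e1, ← Finset.sum_range_reflect]; simp
    have e3 : S + S = 0 := by
      nth_rw 1 [e1]
      rw [e2, ← Finset.sum_add_distrib]
      refine Finset.sum_eq_zero fun k hk => ?_
      have hk' : k ≤ n := by simp at hk; omega
      rw [tP_mod p d n k hp hk', tP_mod p d n (n - k) hp (by omega), Nat.sub_sub_self hk']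
      have : (2 * d * (n - k : ℕ) + 1 : ZMod p) = -(2 * d * k + 1) := by
        push_cast [hk']; linear_combination 2 * h0
      rw [this]
      simp only [C_mul, C_neg]
      ring
    have h2 : (2 : ZMod p) ≠ 0 := by
      have : Fact (2 < p) := ⟨by
        have := (Fact.out : p.Prime).two_le
        rcases hodd with ⟨m, rfl⟩; omega⟩
      intro h
      have h' : ((2 : ℕ) : ZMod p) = 0 := by exact_mod_cast h
      have := Nat.le_of_dvd (by norm_num) ((ZMod.natCast_eq_zero_iff 2 p).mp h')
      have := (‹Fact (2 < p)›).out
      omega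
    have h3 : C (2 : ZMod p) * S = 0 := by
      rw [← e3]; simp only [C_ofNat]; ring
    rcases mul_eq_zero.mp h3 with h | h
    · exact absurd (C_eq_zero.mp h) h2
    · exact h
  rw [C_dvd_iff_dvd_coeff]
  intro i
  have := congrArg (fun q => q.coeff i) hz
  simp only [coeff_map, coeff_zero] at this
  exact (ZMod.intCast_zmod_eq_zero_iff_dvd _ p).mp (by simpa using this)

/-- the common denominator -/
def dD (d n : ℕ) (y : ℚ) : ℚ := ∏ j ∈ range n, ((d : ℚ) ^ 2 * ((j : ℚ) + 1) ^ 2 - y)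

lemma dD_split (d n k : ℕ) (hk : k ≤ n) (y : ℚ) :
    (∏ j ∈ range (n - k), ((d : ℚ) ^ 2 * ((n : ℚ) - j) ^ 2 - y)) * dD d k y = dD d n y := by
  unfold dD
  rw [← Finset.prod_range_mul_prod_Ico _ hk, Finset.prod_Ico_eq_prod_range, mul_comm]
  congr 1
  rw [← Finset.prod_range_reflect]
  refine Finset.prod_congr rfl fun j hj => ?_
  have hj' : j < n - k := by simpa using hj
  have : ((n - k - 1 - j : ℕ) : ℚ) = n - k - 1 - j := by
    rw [Nat.cast_sub (by omega), Nat.cast_sub (by omega), Nat.cast_sub (by omega)]; simp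
  rw [this]; push_cast; ring

lemma tP_eval (d n k : ℕ) (hd : d ≠ 0) (hk : k ≤ n) (y : ℤ) (hD : dD d k y ≠ 0) :
    (((tP d n k).eval y : ℤ) : ℚ) =
      (-1) ^ k * (2 * d * k + 1) * poch (1 / d) k * d ^ n * (n.factorial / k.factorial) *
      (∏ j ∈ range k, ((1 + j * d : ℚ) ^ 2 - y)) * dD d n y / dD d k y := by
  have e1 : (n.descFactorial (n - k) : ℚ) = n.factorial / k.factorial := by
    have := Nat.factorial_mul_descFactorial (Nat.sub_le n k)
    rw [Nat.sub_sub_self hk] at this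
    rw [eq_div_iff (by positivity), ← this]; push_cast; ring
  have e2 : (∏ j ∈ range k, (1 + j * d : ℚ)) = d ^ k * poch (1 / d) k := by
    unfold poch
    rw [← Finset.card_range k, ← Finset.prod_const, Finset.card_range, ← Finset.prod_mul_distrib]
    refine Finset.prod_congr rfl fun j _ => ?_
    field_simp
  have e3 : (d : ℚ) ^ n = d ^ k * d ^ (n - k) := by rw [← pow_add]; congr 1; omega
  rw [eq_div_iff hD, ← dD_split d n k hk y]
  unfold tP
  simp only [Polynomial.eval_mul, Polynomial.eval_prod, Polynomial.eval_sub, Polynomial.eval_C,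
    Polynomial.eval_X]
  push_cast
  rw [e1, e2, e3]
  ring

lemma dD_zero (d k : ℕ) : dD d k 0 = (d : ℚ) ^ (2 * k) * (k.factorial : ℚ) ^ 2 := by
  induction k with
  | zero => simp [dD]
  | succ k ih =>
    unfold dD at *
    rw [Finset.prod_range_succ, ih, Nat.factorial_succ]; push_cast; ring

lemma num_zero (d k : ℕ) (hd : d ≠ 0) :
    (∏ j ∈ range k, ((1 + j * d : ℚ) ^ 2 - 0)) = d ^ (2 * k) * poch (1 / d) k ^ 2 := by
  induction k with
  | zero => simp [poch]
  | succ k ih =>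
    rw [Finset.prod_range_succ, ih, poch_succ]; field_simp; ring

lemma dD_p (d n k : ℕ) (hd : d ≠ 0) : dD d k ((n * d + 1) ^ 2) =
    (d : ℚ) ^ (2 * k) * poch (1 - n - 1 / d) k * poch (1 + n + 1 / d) k := by
  induction k with
  | zero => simp [dD, poch]
  | succ k ih =>
    unfold dD at *
    rw [Finset.prod_range_succ, ih, poch_succ, poch_succ]; field_simp; ring

lemma num_p (d n k : ℕ) (hd : d ≠ 0) :
    (∏ j ∈ range k, ((1 + j * d : ℚ) ^ 2 - (n * d + 1) ^ 2)) =
      d ^ (2 * k) * (-1) ^ k * n.descFactorial k * poch (n + 2 / d) k := by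
  rw [← desc_prod]
  induction k with
  | zero => simp [poch]
  | succ k ih =>
    rw [Finset.prod_range_succ, ih, poch_succ, Finset.prod_range_succ]; field_simp; ring

lemma poch_add (a : ℚ) (n k : ℕ) : poch a (n + k) = poch a n * poch (a + n) k := by
  unfold poch; rw [Finset.prod_range_add]; simp [add_assoc]

lemma end_eval (d n : ℕ) (hd : d ≠ 0) :
    poch (1 + 1 / d) n = (-1) ^ n * (n * d + 1) * poch (1 - n - 1 / d) n := by
  have h1 : poch (1 - n - 1 / d : ℚ) n = (-1) ^ n * poch (1 / d) n := by
    unfold poch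
    rw [← Finset.prod_range_reflect, ← Finset.card_range n, ← Finset.prod_const,
      Finset.card_range, ← Finset.prod_mul_distrib]
    refine Finset.prod_congr rfl fun j hj => ?_
    have hj' : j < n := by simpa using hj
    rw [Nat.cast_sub (by omega), Nat.cast_sub (by omega)]; push_cast; ring
  have h2 : poch (1 + 1 / d : ℚ) n = (n * d + 1) * poch (1 / d) n := by
    clear h1
    induction n with
    | zero => simp [poch]
    | succ n ih => rw [poch_succ, ih, poch_succ]; push_cast; field_simp; ring
  have e : ((-1 : ℚ) ^ n) * (-1) ^ n = 1 := by rw [← mul_pow]; simp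
  rw [h1, h2]
  linear_combination -(n * d + 1) * poch (1 / d) n * e

lemma inv_ne_int (d : ℕ) (hd : 2 ≤ d) (m : ℤ) : (1 / d : ℚ) ≠ m := by
  intro h
  have hd' : (d : ℚ) ≠ 0 := by positivity
  rw [div_eq_iff hd'] at h
  have : (1 : ℤ) = m * d := by exact_mod_cast h
  have : (d : ℤ) ∣ 1 := ⟨m, by linarith⟩
  have := Int.le_of_dvd one_pos this
  omega

lemma sum_p (d n : ℕ) (hd : 2 ≤ d) :
    ((∑ k ∈ range (n + 1), (tP d n k).eval (((n * d + 1 : ℕ) : ℤ) ^ 2) : ℤ) : ℚ) =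
      (-1) ^ n * (n * d + 1) * d ^ n * n.factorial * dD d n ((n * d + 1) ^ 2) := by
  have hd0 : d ≠ 0 := by omega
  have hdq : (d : ℚ) ≠ 0 := by exact_mod_cast hd0
  have hb : (1 + 1 / d - (n + 2 / d) : ℚ) = 1 - n - 1 / d := by field_simp; ring
  have h1 : ∀ j : ℕ, (1 - n - 1 / d + j : ℚ) ≠ 0 := by
    intro j h
    apply inv_ne_int d hd (1 - n + j)
    push_cast; linarith
  have h2 : ∀ j : ℕ, (1 + 1 / d + j : ℚ) ≠ 0 := fun j => by positivity
  have hs := wz_sum (1 / d) (n + 2 / d) (by rw [hb]; exact h1) h2 n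
  have key : ∀ k ∈ range (n + 1), (((tP d n k).eval (((n * d + 1 : ℕ) : ℤ) ^ 2) : ℤ) : ℚ) =
      wF (1 / d) (n + 2 / d) n k * ((-1) ^ n * (n * d + 1) * d ^ (n + 1) * n.factorial *
        dD d n ((n * d + 1) ^ 2)) := by
    intro k hk
    have hk' : k ≤ n := by simp at hk; omega
    have p1 := poch_ne _ h1 k
    have p1n := poch_ne _ h1 n
    have p2 := poch_ne _ h2 n
    have p3 : poch (1 + n + 1 / d : ℚ) k ≠ 0 := poch_ne _ (fun j => by positivity) k
    have hD : dD d k ((n * d + 1) ^ 2) ≠ 0 := by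
      rw [dD_p d n k hd0]; positivity
    have cast : (((((n * d + 1 : ℕ) : ℤ) ^ 2 : ℤ)) : ℚ) = (n * d + 1) ^ 2 := by push_cast; ring
    rw [tP_eval d n k hd0 hk' _ (by rw [cast]; exact hD), cast, num_p d n k hd0, dD_p d n k hd0]
    unfold wF
    have i1 : (1 + 1 / d + n : ℚ) = 1 + n + 1 / d := by ring
    rw [hb, poch_add, i1, end_eval d n hd0]
    have hc : (n.descFactorial k : ℚ) = k.factorial * n.choose k := by
      exact_mod_cast Nat.descFactorial_eq_factorial_mul_choose n k
    rw [hc]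
    have e : ((-1 : ℚ) ^ k) * (-1) ^ k = 1 := by rw [← mul_pow]; simp
    have hf : (k.factorial : ℚ) ≠ 0 := by positivity
    have hp0 : (n * d + 1 : ℚ) ≠ 0 := by positivity
    have hm : ((-1 : ℚ) ^ n) ≠ 0 := by positivity
    generalize dD d n ((n * d + 1) ^ 2) = D
    generalize poch (1 + n + 1 / d : ℚ) k = u1 at *
    generalize poch (1 - n - 1 / d : ℚ) k = u2 at *
    generalize poch (1 - n - 1 / d : ℚ) n = u3 at *
    generalize poch (1 / d : ℚ) k = u4 at *
    generalize poch (n + 2 / d : ℚ) k = u5 at *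
    generalize ((-1 : ℚ) ^ n) = s at *
    generalize ((-1 : ℚ) ^ k) = t at *
    field_simp
    linear_combination (2 * d * k + 1) * d * d ^ n * u4 * (n.choose k) * u5 * D * e
  push_cast at key ⊢
  rw [Finset.sum_congr rfl key, ← Finset.sum_mul, hs]
  field_simp
  ring

lemma sum_0 (d n : ℕ) (hd : d ≠ 0) :
    ((∑ k ∈ range (n + 1), (tP d n k).eval 0 : ℤ) : ℚ) =
      d ^ (3 * n) * n.factorial ^ 3 * (∑ k ∈ Finset.range (n + 1),
          (-1 : ℚ) ^ k * (2 * (d : ℚ) * k + 1) * poch (1 / (d : ℚ)) k ^ 3 /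
            ((k.factorial : ℚ)) ^ 3) := by
  have hdq : (d : ℚ) ≠ 0 := by exact_mod_cast hd
  push_cast
  rw [Finset.mul_sum]
  refine Finset.sum_congr rfl fun k hk => ?_
  have hk' : k ≤ n := by simp at hk; omega
  have hf : (k.factorial : ℚ) ≠ 0 := by positivity
  have := tP_eval d n k hd hk' 0 (by push_cast; rw [dD_zero]; positivity)
  rw [this]
  push_cast
  rw [num_zero d k hd, dD_zero, dD_zero]
  field_simp
  ring

/-- integer version of the denominator -/
def dZ (d n : ℕ) (y : ℤ) : ℤ := ∏ j ∈ range n, ((d : ℤ) ^ 2 * ((j : ℤ) + 1) ^ 2 - y)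

lemma dZ_cast (d n : ℕ) (y : ℤ) : ((dZ d n y : ℤ) : ℚ) = dD d n y := by
  simp [dZ, dD]

lemma dZ_sub (d n : ℕ) (y : ℤ) : y ∣ dZ d n y - dZ d n 0 := by
  have h := Polynomial.sub_dvd_eval_sub y 0
    (∏ j ∈ range n, (Polynomial.C ((d : ℤ) ^ 2 * ((j : ℤ) + 1) ^ 2) - Polynomial.X))
  simpa [Polynomial.eval_prod, dZ] using h

lemma main_int (p d n : ℕ) [Fact p.Prime] (hodd : Odd p) (hd : 2 ≤ d) (hp : p = n * d + 1) :
    (p : ℤ) ^ 3 ∣ (∑ k ∈ range (n + 1), (tP d n k).eval 0) -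
      (-1) ^ n * p * (d ^ (3 * n) * n.factorial ^ 3) := by
  have hP : (∑ k ∈ range (n + 1), (tP d n k).eval ((p : ℤ) ^ 2)) =
      (-1) ^ n * p * d ^ n * n.factorial * dZ d n ((p : ℤ) ^ 2) := by
    have h := sum_p d n hd
    rw [← hp] at h
    have e : ((n : ℚ) * d + 1) = (p : ℚ) := by rw [hp]; push_cast; ring
    rw [e] at h
    have c := dZ_cast d n ((p : ℤ) ^ 2)
    push_cast at c
    rw [← c] at h
    exact_mod_cast h
  have hD0 : dZ d n 0 = d ^ (2 * n) * (n.factorial : ℤ) ^ 2 := by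
    have c := dZ_cast d n 0
    push_cast at c
    rw [dD_zero] at c
    exact_mod_cast c
  obtain ⟨Q, hQ⟩ := sum_mod p d n hodd hp
  have ev : ∀ y : ℤ, (∑ k ∈ range (n + 1), (tP d n k).eval y) = p * Q.eval y := by
    intro y
    rw [← Polynomial.eval_finsetSum, hQ]; simp
  obtain ⟨u, hu⟩ := Polynomial.sub_dvd_eval_sub ((p : ℤ) ^ 2) 0 Q
  obtain ⟨v, hv⟩ := dZ_sub d n ((p : ℤ) ^ 2)
  rw [ev] at hP ⊢
  refine ⟨-u + (-1) ^ n * d ^ n * n.factorial * v, ?_⟩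
  rw [hD0] at hv
  have e3 : (d : ℤ) ^ (3 * n) = d ^ n * d ^ (2 * n) := by rw [← pow_add]; congr 1; ring
  rw [e3]
  linear_combination hP - (p : ℤ) * hu + (-1) ^ n * p * d ^ n * n.factorial * hv

theorem stmt17 (p d : ℕ) [Fact p.Prime] (hodd : Odd p) (hd : 0 < d)
    (hdeven : Even d) (hpd : p % d = 1) :
    ‖(((∑ k ∈ Finset.range ((p - 1) / d + 1),
          (-1 : ℚ) ^ k * (2 * (d : ℚ) * k + 1) * poch (1 / (d : ℚ)) k ^ 3 /
            ((k.factorial : ℚ)) ^ 3) -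
        ((-1 : ℚ) ^ ((p - 1) / d) * p) : ℚ) : ℚ_[p])‖ ≤
      (p : ℝ) ^ (-3 : ℤ) := by
  have hpp : p.Prime := Fact.out
  have hd2 : 2 ≤ d := by rcases hdeven with ⟨m, rfl⟩; omega
  obtain ⟨n, hn⟩ : ∃ n, n = (p - 1) / d := ⟨_, rfl⟩
  have hp : p = n * d + 1 := by
    have h := Nat.div_add_mod p d
    have h' : p - 1 = d * (p / d) := by omega
    have : n = p / d := by rw [hn, h', Nat.mul_div_cancel_left _ hd]
    rw [this, mul_comm]; omega
  rw [← hn]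
  have hI := main_int p d n hodd hd2 hp
  have hS := sum_0 d n (by omega)
  set S := (∑ k ∈ Finset.range (n + 1),
          (-1 : ℚ) ^ k * (2 * (d : ℚ) * k + 1) * poch (1 / (d : ℚ)) k ^ 3 /
            ((k.factorial : ℚ)) ^ 3)
  set I := (∑ k ∈ range (n + 1), (tP d n k).eval 0) with hIdef
  set M : ℕ := d ^ (3 * n) * n.factorial ^ 3 with hM
  have hcop : ¬ p ∣ M := by
    intro h
    rcases (hpp.dvd_mul).mp h with h | h
    · have h := hpp.dvd_of_dvd_pow h
      have : p ∣ 1 := (Nat.dvd_add_right (h.mul_left n)).mp (by rw [← hp])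
      exact hpp.one_lt.ne' (Nat.dvd_one.mp this)
    · have h := (hpp.dvd_factorial).mp (hpp.dvd_of_dvd_pow h)
      nlinarith
  have hMn : ‖(M : ℚ_[p])‖ = 1 := by
    rw [Padic.norm_natCast_eq_one_iff]
    exact (Nat.Prime.coprime_iff_not_dvd hpp).mpr hcop
  have hq : ((I - (-1) ^ n * p * M : ℤ) : ℚ) = M * (S - (-1) ^ n * p) := by
    push_cast [hM] at hS ⊢
    rw [hS]; ring
  have hq' : ((I - (-1) ^ n * p * M : ℤ) : ℚ_[p]) = M * ((S - (-1) ^ n * p : ℚ) : ℚ_[p]) := by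
    have := congrArg (fun x : ℚ => (x : ℚ_[p])) hq
    push_cast at this ⊢
    exact this
  have hle : ‖((I - (-1) ^ n * p * M : ℤ) : ℚ_[p])‖ ≤ (p : ℝ) ^ (-(3 : ℕ) : ℤ) := by
    rw [Padic.norm_int_le_pow_iff_dvd]
    push_cast [hM]
    exact hI
  rw [hq', norm_mul, hMn, one_mul] at hle
  exact_mod_cast hle
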